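/- Let (W^G, C^G, F^G) be an ℓℓ-extension of a model structure (W,C,F) on a bicomplete category M. Assume that (W,C,F) is left proper and that C^G is invariant in C under W, meaning: for every commutative square f∘⁻ with maps u : A → A' and v : B → B' in W and vertical maps f : A → B and g : A' → B' in C satisfying v∘f = g∘u, f is in C^G if and only if g is in C^G. Let f : X → Z, g : Y → Z and h : X → Y be maps with f = g∘h, where f is in F^G, g is in F and h is in W. Then g is in F^G. -/

import Mathlib

/-! Factor `h` as a cofibration `i : X ⟶ X'` followed by a trivial fibration `p : X' ⟶ Y`; by
two-out-of-three `i` is a weak equivalence. The claim then splits into two lifting problems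
against a `j` in `CG ∩ WG`.

* `p ≫ g` is in `FG` (`fib_of_trivCof_comp`): since `f = i ≫ (p ≫ g)` is in `F`, it is a deformation
  retract of `p ≫ g` over `Z`, the homotopy taking values in a path object of `X'` over `Z`. A lift
  into `X` is pushed into `X'` and then corrected along this homotopy.
* `g` is in `FG` (`fib_of_trivFib_comp`): replace `j` by a cofibration `j'` between cofibrant objects.
  Invariance of `CG` keeps `j'` in `CG ∩ WG`, and the top map of the square now lifts through the
  trivial fibration `p`, so `j'` lifts against `g`. Left properness compares the pushout of `j'`
  with `j`, and the lift is transported to `j`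
  (`lift_of_weq_square`). -/

open CategoryTheory CategoryTheory.Limits

universe v u v' u'

namespace LLExt

variable {M : Type u} [Category.{v} M]

/-- A class of morphisms has the two-out-of-three property. -/
def TwoOutOfThree (W : MorphismProperty M) : Prop :=
  (∀ ⦃X Y Z : M⦄ (f : X ⟶ Y) (g : Y ⟶ Z), W f → W g → W (f ≫ g)) ∧
  (∀ ⦃X Y Z : M⦄ (f : X ⟶ Y) (g : Y ⟶ Z), W f → W (f ≫ g) → W g) ∧
  (∀ ⦃X Y Z : M⦄ (f : X ⟶ Y) (g : Y ⟶ Z), W g → W (f ≫ g) → W f)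

/-- A class of morphisms is closed under retracts: if `f` is a retract of `g`
(in the arrow category) and `K g`, then `K f`. -/
def ClosedUnderRetracts (K : MorphismProperty M) : Prop :=
  ∀ ⦃A B A' B' : M⦄ (f : A ⟶ B) (g : A' ⟶ B') (i : A ⟶ A') (r : A' ⟶ A)
    (i' : B ⟶ B') (r' : B' ⟶ B),
    i ≫ r = 𝟙 A → i' ≫ r' = 𝟙 B → f ≫ i' = i ≫ g → g ≫ r' = r ≫ f → K g → K f

/-- A class of morphisms is closed under composition. -/
def ClosedUnderComposition (K : MorphismProperty M) : Prop :=
  ∀ ⦃X Y Z : M⦄ (f : X ⟶ Y) (g : Y ⟶ Z), K f → K g → K (f ≫ g)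

/-- A class of morphisms is closed under pushout (cobase change). -/
def ClosedUnderPushouts (K : MorphismProperty M) : Prop :=
  ∀ ⦃Z X Y P : M⦄ (f : Z ⟶ X) (g : Z ⟶ Y) (inl : X ⟶ P) (inr : Y ⟶ P),
    IsPushout f g inl inr → K f → K inr

/-- A class of morphisms is closed under pullback (base change). -/
def ClosedUnderPullbacks (K : MorphismProperty M) : Prop :=
  ∀ ⦃P X Y Z : M⦄ (fst : P ⟶ X) (snd : P ⟶ Y) (f : X ⟶ Z) (g : Y ⟶ Z),
    IsPullback fst snd f g → K f → K snd

/-- Left properness: the pushout of a map in `W` along a map in `C` is in `W`. -/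
def LeftProper (W C : MorphismProperty M) : Prop :=
  ∀ ⦃A X B P : M⦄ (f : A ⟶ X) (i : A ⟶ B) (inl : X ⟶ P) (inr : B ⟶ P),
    IsPushout f i inl inr → W f → C i → W inr

/-- Right properness: the pullback of a map in `W` along a map in `F` is in `W`. -/
def RightProper (W F : MorphismProperty M) : Prop :=
  ∀ ⦃P X Y Z : M⦄ (fst : P ⟶ X) (snd : P ⟶ Y) (f : X ⟶ Z) (g : Y ⟶ Z),
    IsPullback fst snd f g → W f → F g → W snd

/-- A (Quillen) model structure on a category, given by classes `W` (weak
equivalences), `C` (cofibrations) and `F` (fibrations). -/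
structure IsModelStructure (W C F : MorphismProperty M) : Prop where
  weq_twoOutOfThree : TwoOutOfThree W
  weq_retracts : ClosedUnderRetracts W
  cof_retracts : ClosedUnderRetracts C
  fib_retracts : ClosedUnderRetracts F
  lift_trivCof_fib : ∀ ⦃A B X Y : M⦄ (i : A ⟶ B) (p : X ⟶ Y),
    C i → W i → F p → HasLiftingProperty i p
  lift_cof_trivFib : ∀ ⦃A B X Y : M⦄ (i : A ⟶ B) (p : X ⟶ Y),
    C i → F p → W p → HasLiftingProperty i p
  fact_cof_trivFib : ∀ ⦃X Y : M⦄ (f : X ⟶ Y),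
    ∃ (Z : M) (i : X ⟶ Z) (p : Z ⟶ Y), C i ∧ F p ∧ W p ∧ i ≫ p = f
  fact_trivCof_fib : ∀ ⦃X Y : M⦄ (f : X ⟶ Y),
    ∃ (Z : M) (i : X ⟶ Z) (p : Z ⟶ Y), C i ∧ W i ∧ F p ∧ i ≫ p = f

/-- The retract argument: the fibrations are exactly the maps with the right lifting property
against the trivial cofibrations. -/
lemma IsModelStructure.fib_eq_rlp {W C F : MorphismProperty M} (hMS : IsModelStructure W C F) :
    F = (C ⊓ W).rlp := by
  ext X Y f
  constructor
  · intro hf A B i hi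
    exact hMS.lift_trivCof_fib i f hi.1 hi.2 hf
  · intro hf
    obtain ⟨Z, i, p, hiC, hiW, hp, rfl⟩ := hMS.fact_trivCof_fib f
    have := hf i ⟨hiC, hiW⟩
    have sq : CommSq (𝟙 X) i (i ≫ p) p := ⟨by simp⟩
    exact hMS.fib_retracts (i ≫ p) p i sq.lift (𝟙 Y) (𝟙 Y) (by simp) (by simp) (by simp)
      (by simp) hp

lemma IsModelStructure.weq_id {W C F : MorphismProperty M} (hMS : IsModelStructure W C F)
    (X : M) : W (𝟙 X) := by
  obtain ⟨Z, i, p, -, -, hp, -⟩ := hMS.fact_cof_trivFib (𝟙 X)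
  exact hMS.weq_twoOutOfThree.2.1 p (𝟙 X) hp (by simpa using hp)

/-- If `q` is a fibration, `i` a trivial cofibration and `i ≫ q` is a fibration, then the source
of `i ≫ q` is a deformation retract of the source of `q` over `Z`, so any cofibration which lifts
against `i ≫ q` lifts against `q`. -/
lemma IsModelStructure.lift_of_deformation {W C F : MorphismProperty M} [HasLimits M]
    (hMS : IsModelStructure W C F) {X X' Z A B : M} (i : X ⟶ X') (q : X' ⟶ Z) (j : A ⟶ B)
    (hiC : C i) (hiW : W i) (hq : F q) (hf : F (i ≫ q)) (hj : C j)
    [HasLiftingProperty j (i ≫ q)] : HasLiftingProperty j q := by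
  refine ⟨fun {a b} sq => ?_⟩
  have := hMS.lift_trivCof_fib i (i ≫ q) hiC hiW hf
  have sqr : CommSq (𝟙 X) i (i ≫ q) q := ⟨by simp⟩
  obtain ⟨r, hir, hrq⟩ : ∃ r : X' ⟶ X, i ≫ r = 𝟙 X ∧ r ≫ i ≫ q = q :=
    ⟨sqr.lift, sqr.fac_left, sqr.fac_right⟩
  -- a path object `P` of `X'` over `Z`
  obtain ⟨P, c, e, -, hcW, he, hce⟩ :=
    hMS.fact_trivCof_fib (pullback.lift (𝟙 X') (𝟙 X') rfl : X' ⟶ pullback q q)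
  have hev0F : F (e ≫ pullback.fst q q) := by
    rw [hMS.fib_eq_rlp] at hq he ⊢
    exact MorphismProperty.comp_mem _ _ _ he (MorphismProperty.pullback_fst _ _ hq)
  have hev0W : W (e ≫ pullback.fst q q) := by
    refine hMS.weq_twoOutOfThree.2.1 c _ hcW ?_
    rw [reassoc_of% hce, pullback.lift_fst]
    exact hMS.weq_id X'
  -- a homotopy `H` from `r ≫ i` to the identity, over `Z`
  have := hMS.lift_trivCof_fib i e hiC hiW he
  have sqH : CommSq (i ≫ c) i e
      (pullback.lift (r ≫ i) (𝟙 X') (by simpa using hrq) : X' ⟶ pullback q q) := ⟨by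
    rw [Category.assoc, hce]
    apply pullback.hom_ext
    · simp only [Category.assoc, pullback.lift_fst, reassoc_of% hir, Category.comp_id]
    · simp only [Category.assoc, pullback.lift_snd]⟩
  obtain ⟨H, hH⟩ : ∃ H : X' ⟶ P, H ≫ e = pullback.lift (r ≫ i) (𝟙 X') (by simpa using hrq) :=
    ⟨sqH.lift, sqH.fac_right⟩
  -- lift the retracted square to `X`
  have sql : CommSq (a ≫ r) j (i ≫ q) b := ⟨by rw [Category.assoc, hrq, sq.w]⟩
  obtain ⟨l, hjl, hlb⟩ : ∃ l : B ⟶ X, j ≫ l = a ≫ r ∧ l ≫ i ≫ q = b :=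
    ⟨sql.lift, sql.fac_left, sql.fac_right⟩
  -- extend the homotopy over `B`; its other end is the required lift
  have := hMS.lift_cof_trivFib j _ hj hev0F hev0W
  have sqK : CommSq (a ≫ H) j (e ≫ pullback.fst q q) (l ≫ i) := ⟨by
    rw [Category.assoc, reassoc_of% hH, pullback.lift_fst, reassoc_of% hjl]⟩
  refine ⟨⟨⟨sqK.lift ≫ e ≫ pullback.snd q q, ?_, ?_⟩⟩⟩
  · rw [sqK.fac_left_assoc, Category.assoc, reassoc_of% hH, pullback.lift_snd, Category.comp_id]
  · have h1 := sqK.fac_right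
    simp only [Category.assoc] at h1 ⊢
    rw [← pullback.condition, reassoc_of% h1, hlb]

/-- Over a left proper model structure, a lift for a cofibration `j'` weakly equivalent to the
cofibration `j` can be transported to a lift for `j` against a fibration `g`. -/
lemma IsModelStructure.lift_of_weq_square {W C F : MorphismProperty M} [HasColimits M]
    (hMS : IsModelStructure W C F) (hlp : LeftProper W C)
    {A B A' B' Y Z : M} {u : A' ⟶ A} {v : B' ⟶ B} {j' : A' ⟶ B'} {j : A ⟶ B}
    (hu : W u) (hv : W v) (hj' : C j') (hj : C j) (w : j' ≫ v = u ≫ j)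
    {g : Y ⟶ Z} (hg : F g) {a : A ⟶ Y} {b : B ⟶ Z} (sq : CommSq a j g b)
    (k : B' ⟶ Y) (hk : j' ≫ k = u ≫ a) (hkb : k ≫ g = v ≫ b) : sq.HasLift := by
  -- the comparison map from the pushout of `j'` along `u` to `B` is a weak equivalence
  have hin : W (pushout.inr u j') := hlp u j' _ _ (IsPushout.of_hasPushout u j') hu hj'
  have hd : W (pushout.desc j v w.symm : pushout u j' ⟶ B) :=
    hMS.weq_twoOutOfThree.2.1 _ _ hin (by rwa [pushout.inr_desc])
  obtain ⟨Q, c, t, hcC, ht, htW, hct⟩ :=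
    hMS.fact_cof_trivFib (pushout.desc j v w.symm : pushout u j' ⟶ B)
  have hcW : W c := hMS.weq_twoOutOfThree.2.2 c t htW (by rwa [hct])
  -- the induced map on the pushout extends to `Q`, of which `B` is a retract under `A`
  have := hMS.lift_trivCof_fib c g hcC hcW hg
  have sqQ : CommSq (pushout.desc a k hk.symm : pushout u j' ⟶ Y) c g (t ≫ b) := ⟨by
    rw [reassoc_of% hct]
    apply pushout.hom_ext
    · rw [pushout.inl_desc_assoc, pushout.inl_desc_assoc, sq.w]
    · rw [pushout.inr_desc_assoc, pushout.inr_desc_assoc, hkb]⟩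
  have := hMS.lift_cof_trivFib j t hj ht htW
  have sqs : CommSq (pushout.inl u j' ≫ c) j t (𝟙 B) := ⟨by
    rw [Category.assoc, hct, pushout.inl_desc, Category.comp_id]⟩
  refine ⟨⟨⟨sqs.lift ≫ sqQ.lift, ?_, ?_⟩⟩⟩
  · rw [sqs.fac_left_assoc, Category.assoc, sqQ.fac_left, pushout.inl_desc]
  · rw [Category.assoc, sqQ.fac_right, sqs.fac_right_assoc, Category.id_comp]

/-- The theorem in the case where the first map `i` is a trivial cofibration for `(W, C, F)`;
neither properness nor invariance is needed. -/
lemma fib_of_trivCof_comp [HasLimits M] {W C F WG CG FG : MorphismProperty M}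
    (hMS : IsModelStructure W C F) (hG : IsModelStructure WG CG FG)
    (hCsub : ∀ ⦃X Y : M⦄ (f : X ⟶ Y), CG f → C f)
    (hFsub : ∀ ⦃X Y : M⦄ (f : X ⟶ Y), FG f → F f)
    {X X' Z : M} (i : X ⟶ X') (q : X' ⟶ Z) (hiC : C i) (hiW : W i) (hq : F q)
    (hf : FG (i ≫ q)) : FG q := by
  rw [hG.fib_eq_rlp]
  intro A B j hj
  have := hG.lift_trivCof_fib j _ hj.1 hj.2 hf
  exact hMS.lift_of_deformation i q j hiC hiW hq (hFsub _ hf) (hCsub _ hj.1)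

/-- The theorem in the case where the first map `p` is a trivial fibration for `(W, C, F)`, by
cofibrant replacement of the lifting problem. -/
lemma fib_of_trivFib_comp [HasColimits M] {W C F WG CG FG : MorphismProperty M}
    (hMS : IsModelStructure W C F) (hG : IsModelStructure WG CG FG)
    (hWsub : ∀ ⦃X Y : M⦄ (f : X ⟶ Y), W f → WG f)
    (hCsub : ∀ ⦃X Y : M⦄ (f : X ⟶ Y), CG f → C f)
    (hlp : LeftProper W C)
    (hinv : ∀ ⦃A B A' B' : M⦄ (u : A ⟶ A') (v : B ⟶ B') (f : A ⟶ B) (g : A' ⟶ B'),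
      W u → W v → C f → C g → f ≫ v = u ≫ g → (CG f ↔ CG g))
    {X Y Z : M} (p : X ⟶ Y) (g : Y ⟶ Z) (hp : F p) (hpW : W p) (hg : F g)
    (hpg : FG (p ≫ g)) : FG g := by
  rw [hG.fib_eq_rlp]
  intro A B j hj
  refine ⟨fun {a b} sq => ?_⟩
  -- a cofibrant replacement `j'` of `j`
  obtain ⟨A', o, u, ho, -, hu, -⟩ := hMS.fact_cof_trivFib (initial.to A)
  obtain ⟨B', j', v, hj', -, hv, w⟩ := hMS.fact_cof_trivFib (u ≫ j)
  have hj'CG : CG j' := (hinv u v j' j hu hv hj' (hCsub _ hj.1) w).2 hj.1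
  have hj'WG : WG j' := by
    refine hG.weq_twoOutOfThree.2.2 j' v (hWsub _ hv) ?_
    rw [w]
    exact hG.weq_twoOutOfThree.1 _ _ (hWsub _ hu) hj.2
  -- `A'` is cofibrant, so `u ≫ a` lifts through `p`
  have := hMS.lift_cof_trivFib o p ho hp hpW
  have sqa : CommSq (initial.to X) o p (u ≫ a) := ⟨initial.hom_ext _ _⟩
  have := hG.lift_trivCof_fib j' _ hj'CG hj'WG hpg
  have sqk : CommSq sqa.lift j' (p ≫ g) (v ≫ b) := ⟨by
    rw [sqa.fac_right_assoc, reassoc_of% w, Category.assoc, sq.w]⟩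
  refine hMS.lift_of_weq_square hlp hu hv hj' (hCsub _ hj.1) w hg sq (sqk.lift ≫ p) ?_ ?_
  · rw [sqk.fac_left_assoc, sqa.fac_right]
  · rw [Category.assoc, sqk.fac_right]

/-- Proposition 2.6(1), converse part. -/
theorem prop_2_6_1_second
    [HasLimits M] [HasColimits M]
    (W C F WG CG FG : MorphismProperty M)
    (hMS : IsModelStructure W C F)
    (hG : IsModelStructure WG CG FG)
    (hWsub : ∀ ⦃X Y : M⦄ (f : X ⟶ Y), W f → WG f)
    (hCsub : ∀ ⦃X Y : M⦄ (f : X ⟶ Y), CG f → C f)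
    (hFsub : ∀ ⦃X Y : M⦄ (f : X ⟶ Y), FG f → F f)
    (hlp : LeftProper W C)
    (hinv : ∀ ⦃A B A' B' : M⦄ (u : A ⟶ A') (v : B ⟶ B') (f : A ⟶ B) (g : A' ⟶ B'),
      W u → W v → C f → C g → f ≫ v = u ≫ g → (CG f ↔ CG g)) :
    ∀ ⦃X Y Z : M⦄ (f : X ⟶ Z) (g : Y ⟶ Z) (h : X ⟶ Y),
      f = h ≫ g → FG f → F g → W h → FG g := by
  rintro X Y Z f g h rfl hf hg hh
  obtain ⟨X', i, p, hiC, hp, hpW, rfl⟩ := hMS.fact_cof_trivFib h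
  have hiW : W i := hMS.weq_twoOutOfThree.2.2 i p hpW hh
  have hpgF : F (p ≫ g) := by
    rw [hMS.fib_eq_rlp] at hp hg ⊢
    exact MorphismProperty.comp_mem _ _ _ hp hg
  refine fib_of_trivFib_comp hMS hG hWsub hCsub hlp hinv p g hp hpW hg ?_
  exact fib_of_trivCof_comp hMS hG hCsub hFsub i (p ≫ g) hiC hiW hpgF (by simpa using hf)

end LLExt
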